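/- arXiv:2301.10696 — 7 statements merged into one kernel-verified Lean document; each statement's English description precedes it below -/
import Mathlib

section
/- Set-theoretic and type-theoretic ordinals coincide: there is a relation isomorphism between the subtype S = {x : ZFSet.{u} // x is a set-theoretic ordinal} equipped with the membership relation (x ∈ y on underlying sets) and the type Ordinal.{u} equipped with its strict order <; i.e., there is a bijection S ≃ Ordinal.{u} that preserves and reflects the respective orders. -/
universe u

/-- A set-theoretic ordinal: a hereditarily transitive set, i.e. a transitive set
all of whose elements are transitive. -/
def ZFSet.IsSTOrdinal (x : ZFSet) : Prop :=
  x.IsTransitive ∧ ∀ y ∈ x, ZFSet.IsTransitive y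

theorem isSTOrdinal_iff_isOrdinal {x : ZFSet.{u}} : x.IsSTOrdinal ↔ x.IsOrdinal :=
  ZFSet.isOrdinal_iff_forall_mem_isTransitive.symm

/-- The isomorphism sending a set-theoretic ordinal to its rank in the cumulative hierarchy,
which for such a set is its order type under `∈`. Its inverse is `Ordinal.toZFSet`. -/
noncomputable def stOrdinalRankIso :
    (fun x y : {x : ZFSet.{u} // x.IsSTOrdinal} => x.1 ∈ y.1) ≃r
      ((· < ·) : Ordinal.{u} → Ordinal.{u} → Prop) where
  toEquiv := (Equiv.subtypeEquivRight fun _ => isSTOrdinal_iff_isOrdinal).trans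
    Ordinal.toZFSetIso.symm.toEquiv
  map_rel_iff' {x y} :=
    have hx : x.1.IsOrdinal := isSTOrdinal_iff_isOrdinal.1 x.2
    have hy : y.1.IsOrdinal := isSTOrdinal_iff_isOrdinal.1 y.2
    hx.rank_lt_iff_mem hy

/-- set-theoretic and type-theoretic ordinals coincide: the subtype of
set-theoretic ordinals in `ZFSet.{u}`, ordered by membership, is order-isomorphic to
`Ordinal.{u}` with its strict order. -/
theorem stOrdinals_iso_ordinals :
    Nonempty ((fun x y : {x : ZFSet.{u} // x.IsSTOrdinal} => x.1 ∈ y.1) ≃r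
      ((· < ·) : Ordinal.{u} → Ordinal.{u} → Prop)) :=
  ⟨stOrdinalRankIso⟩
end

section
/- If x : ZFSet is a set-theoretic ordinal, then its type of elements {y : ZFSet // y ∈ x}, ordered by membership of the underlying sets, is a type-theoretic ordinal: the relation is wellfounded, extensional, and transitive. -/
universe u

theorem eq_of_subset_of_forall_mem_iff {x a b : ZFSet.{u}} (ha : a ⊆ x) (hb : b ⊆ x)
    (h : ∀ c ∈ x, c ∈ a ↔ c ∈ b) : a = b :=
  ZFSet.ext fun c => ⟨fun hc => (h c (ha hc)).mp hc, fun hc => (h c (hb hc)).mpr hc⟩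

theorem eq_of_mem_isTransitive_of_forall_mem_iff {x a b : ZFSet.{u}} (hx : x.IsTransitive)
    (ha : a ∈ x) (hb : b ∈ x) (h : ∀ c ∈ x, c ∈ a ↔ c ∈ b) : a = b :=
  eq_of_subset_of_forall_mem_iff (hx.subset_of_mem ha) (hx.subset_of_mem hb) h

/-- the type of elements of a set-theoretic ordinal, ordered by
membership, is a type-theoretic ordinal: wellfounded, extensional, and transitive. -/
theorem elements_of_stOrdinal_is_type_theoretic_ordinal (x : ZFSet.{u})
    (hx : x.IsSTOrdinal) :
    (WellFounded fun a b : {y : ZFSet.{u} // y ∈ x} => a.1 ∈ b.1) ∧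
    (∀ a b : {y : ZFSet.{u} // y ∈ x},
      (∀ c : {y : ZFSet.{u} // y ∈ x}, c.1 ∈ a.1 ↔ c.1 ∈ b.1) → a = b) ∧
    (∀ a b c : {y : ZFSet.{u} // y ∈ x}, a.1 ∈ b.1 → b.1 ∈ c.1 → a.1 ∈ c.1) := by
  obtain ⟨x_transitive, elements_transitive⟩ := hx
  refine ⟨?wellFounded, ?extensional, ?transitive⟩
  case wellFounded => exact InvImage.wf Subtype.val ZFSet.mem_wf
  case extensional =>
    intro a b h
    have same_members : ∀ c ∈ x, c ∈ a.1 ↔ c ∈ b.1 := fun c hc => h ⟨c, hc⟩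
    exact Subtype.ext
      (eq_of_mem_isTransitive_of_forall_mem_iff x_transitive a.2 b.2 same_members)
  case transitive =>
    intro a b c hab hbc
    exact (elements_transitive c.1 c.2).mem_trans hab hbc
end

section
/- Rank as a quotient: let A : Type u and f : A → ZFSet.{u}, and let x : ZFSet.{u} be a set-theoretic ordinal whose members are exactly the values of f (i.e., y ∈ x if and only if there exists a : A with f a = y). Consider the quotient Q of A by the equivalence relation a ~ b defined by f a = f b, with the induced relation [a] ≺ [b] defined by f a ∈ f b. Then ≺ is well-defined on Q, is wellfounded, extensional, and transitive (hence a well-order), and its order type equals ZFSet.rank x. -/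
universe u

universe v w

section QuotientRel

variable {α : Type v} {β : Type w}

/-- The relation induced by `r` on the quotient of `α` by `f a = f b`, so that `[a] ≺ [b]` means
`r (f a) (f b)`. Pulling `r` back along `Setoid.kerLift` takes care of well-definedness. -/
def kerQuotientRel (f : α → β) (r : β → β → Prop) :
    Quotient (Setoid.ker f) → Quotient (Setoid.ker f) → Prop :=
  Setoid.kerLift f ⁻¹'o r

theorem kerQuotientRel_mk (f : α → β) (r : β → β → Prop) (a b : α) :
    kerQuotientRel f r (Quotient.mk (Setoid.ker f) a) (Quotient.mk (Setoid.ker f) b) ↔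
      r (f a) (f b) :=
  Iff.rfl

/-- The first isomorphism theorem for sets, carrying along the relation `r` on the codomain: the
range of `f` is presented by a predicate `p`. -/
noncomputable def kerQuotientRelIsoSubrel (f : α → β) (r : β → β → Prop) {p : β → Prop}
    (hp : ∀ y, p y ↔ ∃ a, f a = y) : kerQuotientRel f r ≃r Subrel r p where
  toEquiv := (Setoid.quotientKerEquivRange f).trans
    (Equiv.subtypeEquivRight fun y => (hp y).symm)
  map_rel_iff' := Iff.rfl

end QuotientRel

theorem toZFSet_mem_iff_lt_rank {x : ZFSet.{u}} (hx : x.IsOrdinal) {o : Ordinal.{u}} :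
    o.toZFSet ∈ x ↔ o < x.rank := by
  rw [← (ZFSet.isOrdinal_toZFSet o).rank_lt_iff_mem hx, Ordinal.rank_toZFSet]

/-- The isomorphism between the members of a von Neumann ordinal `x` and the ordinals below its
rank, given by `ZFSet.rank` with inverse `Ordinal.toZFSet`. -/
noncomputable def memRelIsoIioRank {x : ZFSet.{u}} (hx : x.IsOrdinal) :
    Subrel (· ∈ ·) (· ∈ x) ≃r ((· < ·) : Set.Iio x.rank → Set.Iio x.rank → Prop) where
  toFun y := ⟨y.1.rank, ZFSet.rank_lt_of_mem y.2⟩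
  invFun o := ⟨o.1.toZFSet, (toZFSet_mem_iff_lt_rank hx).2 o.2⟩
  left_inv y := Subtype.ext (hx.mem y.2).toZFSet_rank_eq
  right_inv o := Subtype.ext (Ordinal.rank_toZFSet o.1)
  map_rel_iff' {y z} := (hx.mem y.2).rank_lt_iff_mem (hx.mem z.2)

theorem lift_type_eq_lift_rank {α : Type v} {r : α → α → Prop} [IsWellOrder α r] {x : ZFSet.{u}}
    (hx : x.IsOrdinal) (e : r ≃r Subrel (· ∈ ·) (· ∈ x)) :
    Ordinal.lift.{u} (Ordinal.type r) = Ordinal.lift.{v} x.rank := by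
  let toTypeIso : r ≃r ((· < ·) : x.rank.ToType → x.rank.ToType → Prop) :=
    (e.trans (memRelIsoIioRank hx)).trans Ordinal.ToType.mk.toRelIsoLT
  calc Ordinal.lift.{u} (Ordinal.type r)
    _ = Ordinal.lift.{v} (Ordinal.type (α := x.rank.ToType) (· < ·)) :=
      toTypeIso.ordinal_lift_type_eq
    _ = Ordinal.lift.{v} x.rank := by rw [Ordinal.type_toType]

theorem rank_as_quotient_general {A : Type v} (f : A → ZFSet.{u}) (x : ZFSet.{u})
    (hx : x.IsSTOrdinal) (hmem : ∀ y : ZFSet.{u}, y ∈ x ↔ ∃ a : A, f a = y) :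
    ∃ R : Quotient (Setoid.ker f) → Quotient (Setoid.ker f) → Prop,
      (∀ a b : A, R (Quotient.mk (Setoid.ker f) a) (Quotient.mk (Setoid.ker f) b) ↔
        f a ∈ f b) ∧
      WellFounded R ∧
      (∀ p q : Quotient (Setoid.ker f), (∀ t, R t p ↔ R t q) → p = q) ∧
      (∀ p q t : Quotient (Setoid.ker f), R p q → R q t → R p t) ∧
      ∃ h : IsWellOrder (Quotient (Setoid.ker f)) R,
        Ordinal.lift.{u} (@Ordinal.type (Quotient (Setoid.ker f)) R h) =
          Ordinal.lift.{v} (ZFSet.rank x) := by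
  have hord : x.IsOrdinal := ZFSet.isOrdinal_iff_forall_mem_isTransitive.2 hx
  have := hord.isWellOrder
  let e := kerQuotientRelIsoSubrel f (· ∈ ·) hmem
  have wo : IsWellOrder _ (kerQuotientRel f (· ∈ ·)) := e.toRelEmbedding.isWellOrder
  refine ⟨kerQuotientRel f (· ∈ ·), kerQuotientRel_mk f (· ∈ ·), wo.wf, ?extensional, ?transitive,
    wo, lift_type_eq_lift_rank hord e⟩
  case extensional => exact fun _ _ => extensional_of_trichotomous_of_irrefl _
  case transitive => exact fun _ _ _ => _root_.trans

/-- rank as a quotient: if the set-theoretic ordinal `x` has exactly the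
values of `f : A → ZFSet` as members, then the relation `[a] ≺ [b] ↔ f a ∈ f b` is
well-defined on the quotient of `A` by `f a = f b`, it is wellfounded, extensional
and transitive (hence a well-order), and its order type is the rank of `x`. -/
theorem rank_as_quotient {A : Type u} (f : A → ZFSet.{u}) (x : ZFSet.{u})
    (hx : x.IsSTOrdinal) (hmem : ∀ y : ZFSet.{u}, y ∈ x ↔ ∃ a : A, f a = y) :
    ∃ R : Quotient (Setoid.ker f) → Quotient (Setoid.ker f) → Prop,
      (∀ a b : A, R (Quotient.mk (Setoid.ker f) a) (Quotient.mk (Setoid.ker f) b) ↔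
        f a ∈ f b) ∧
      WellFounded R ∧
      (∀ p q : Quotient (Setoid.ker f), (∀ t, R t p ↔ R t q) → p = q) ∧
      (∀ p q t : Quotient (Setoid.ker f), R p q → R q t → R p t) ∧
      ∃ h : IsWellOrder (Quotient (Setoid.ker f)) R,
        @Ordinal.type (Quotient (Setoid.ker f)) R h = ZFSet.rank x := by
  simpa only [Ordinal.lift_id] using rank_as_quotient_general f x hx hmem
end

section
/- The rank of a set-theoretic ordinal is the order type of its membership order: if x : ZFSet.{u} is a set-theoretic ordinal, then the membership relation on the subtype {y : ZFSet.{u} // y ∈ x} is a well-order whose order type (an ordinal in universe u+1) equals the universe lift Ordinal.lift.{u+1} (ZFSet.rank x) of the rank of x. -/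
universe u

/-!
On a transitive set `x` the rank function takes exactly the values below `rank x`: descending along
`∈` from an element of `x`, which never leaves `x`, the rank cannot skip an ordinal. If `x` is an
ordinal, the rank function is moreover an embedding of `(x, ∈)` into the ordinals, so it identifies
`(x, ∈)` with the initial segment of the ordinals below `rank x`.
-/

theorem exists_mem_rank_eq_of_le_rank {x y : ZFSet.{u}} (hx : x.IsTransitive) (hy : y ∈ x)
    {o : Ordinal.{u}} (ho : o ≤ y.rank) : ∃ z ∈ x, z.rank = o := by
  induction y using ZFSet.inductionOn with
  | _ y ih =>
    obtain rfl | hlt := ho.eq_or_lt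
    · exact ⟨y, hy, rfl⟩
    · obtain ⟨w, hwy, how⟩ := ZFSet.lt_rank_iff.1 hlt
      exact ih w hwy (hx.mem_trans hwy hy) how

theorem range_rank_eq_Iio_rank {x : ZFSet.{u}} (hx : x.IsTransitive) :
    Set.range (fun y : {y // y ∈ x} ↦ y.1.rank) = Set.Iio x.rank := by
  ext o
  constructor
  · rintro ⟨y, rfl⟩
    exact ZFSet.rank_lt_of_mem y.2
  · intro ho
    obtain ⟨y, hy, hoy⟩ := ZFSet.lt_rank_iff.1 ho
    obtain ⟨z, hz, hzo⟩ := exists_mem_rank_eq_of_le_rank hx hy hoy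
    exact ⟨⟨z, hz⟩, hzo⟩

/-- The rank function on the elements of an ordinal `x`, as an isomorphism of `(x, ∈)` onto the
proper initial segment of the ordinals with top `rank x`. It computes the order type of `(x, ∈)`
by way of `Ordinal.typein_top`. -/
noncomputable def rankPrincipalSeg {x : ZFSet.{u}} (hx : x.IsOrdinal) :
    PrincipalSeg (Subrel (· ∈ ·) (· ∈ x)) (LT.lt : Ordinal.{u} → Ordinal.{u} → Prop) where
  toFun y := y.1.rank
  inj' y z h := Subtype.ext (((hx.mem y.2).rank_inj (hx.mem z.2)).1 h)
  map_rel_iff' {y z} := (hx.mem y.2).rank_lt_iff_mem (hx.mem z.2)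
  top := x.rank
  mem_range_iff_rel' := Set.ext_iff.1 (range_rank_eq_Iio_rank hx.isTransitive)

/-- the membership order on the type of elements of a set-theoretic
ordinal `x` is a well-order whose order type is the lift of the rank of `x`. -/
theorem type_mem_elements_eq_lift_rank (x : ZFSet.{u}) (hx : x.IsSTOrdinal) :
    ∃ h : IsWellOrder {y : ZFSet.{u} // y ∈ x} (fun a b => a.1 ∈ b.1),
      @Ordinal.type {y : ZFSet.{u} // y ∈ x} (fun a b => a.1 ∈ b.1) h =
        Ordinal.lift.{u+1} (ZFSet.rank x) := by
  have hord : x.IsOrdinal := ZFSet.isOrdinal_iff_forall_mem_isTransitive.2 hx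
  have hwo : IsWellOrder {y // y ∈ x} (Subrel (· ∈ ·) (· ∈ x)) := hord.isWellOrder
  refine ⟨hwo, ?_⟩
  calc Ordinal.type (Subrel (· ∈ ·) (· ∈ x))
      = Ordinal.typein LT.lt x.rank := (Ordinal.typein_top (rankPrincipalSeg hord)).symm
    _ = Ordinal.lift.{u + 1} x.rank := Ordinal.typein_ordinal x.rank
end

section
/- For a mewo (X, <, m), the map sending x to the initial segment X ↓⁺ x is injective: if x₁, x₂ : X and there is an isomorphism of mewos between X ↓⁺ x₁ and X ↓⁺ x₂ — that is, a bijection e : {y | y <⁺ x₁} ≃ {y | y <⁺ x₂} with (y < z ↔ e y < e z) and (y < x₁ ↔ e y < x₂) for all y, z — then x₁ = x₂. -/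
universe u

/-- A marked extensional wellfounded order (mewo): a type equipped with a wellfounded,
extensional binary relation together with a marking predicate. -/
structure Mewo : Type (u + 1) where
  carrier : Type u
  lt : carrier → carrier → Prop
  wf : WellFounded lt
  ext : ∀ x y : carrier, (∀ z : carrier, lt z x ↔ lt z y) → x = y
  marked : carrier → Prop

namespace Mewo

/-- An element is covered if some marked element lies reflexive-transitively above it. -/
def Covered (M : Mewo.{u}) : Prop :=
  ∀ x : M.carrier, ∃ x₀ : M.carrier, M.marked x₀ ∧ Relation.ReflTransGen M.lt x x₀

/-- The initial segment `M ↓⁺ x`: carrier is the elements transitively below `x`, with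
the restricted order; the marked elements are the immediate predecessors of `x`. -/
def seg (M : Mewo.{u}) (x : M.carrier) : Mewo.{u} where
  carrier := { y : M.carrier // Relation.TransGen M.lt y x }
  lt a b := M.lt a.1 b.1
  wf := by
    have h := InvImage.wf
      (fun a : { y : M.carrier // Relation.TransGen M.lt y x } => a.1) M.wf
    exact h
  ext := by
    rintro ⟨a, ha⟩ ⟨b, hb⟩ h
    apply Subtype.ext
    apply M.ext
    intro z
    constructor
    · intro hz
      exact (h ⟨z, Relation.TransGen.head hz ha⟩).mp hz
    · intro hz
      exact (h ⟨z, Relation.TransGen.head hz hb⟩).mpr hz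
  marked a := M.lt a.1 x

end Mewo

/-- An isomorphism of mewos: a bijection preserving and reflecting order and marking. -/
structure MewoIso (M : Mewo.{u}) (N : Mewo.{u}) where
  toEquiv : M.carrier ≃ N.carrier
  lt_iff : ∀ x y : M.carrier, M.lt x y ↔ N.lt (toEquiv x) (toEquiv y)
  marked_iff : ∀ x : M.carrier, M.marked x ↔ N.marked (toEquiv x)

/-- `f` is a simulation from `M` to `N`: it preserves markings, is monotone, and has
the initial-segment property. -/
def IsSimulation (M N : Mewo.{u}) (f : M.carrier → N.carrier) : Prop :=
  (∀ x : M.carrier, M.marked x → N.marked (f x)) ∧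
  (∀ x y : M.carrier, M.lt x y → N.lt (f x) (f y)) ∧
  (∀ (x : M.carrier) (y : N.carrier), N.lt y (f x) → ∃ x' : M.carrier, M.lt x' x ∧ f x' = y)

/-- A bounded simulation `M < N`: a marked element `y : N` together with an isomorphism
of mewos between `M` and the initial segment `N ↓⁺ y`. -/
def BoundedSim (M N : Mewo.{u}) : Prop :=
  ∃ y : N.carrier, N.marked y ∧ Nonempty (MewoIso M (N.seg y))

/-!
A map from a well-founded relation to an extensional one, under which the predecessors of the image
of a point are the images of its predecessors, is unique by well-founded induction. For a simulation
`f : M ↓⁺ x₁ → M ↓⁺ x₂`, both the inclusion `M ↓⁺ x₁ → M` and the composite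
`M ↓⁺ x₁ → M ↓⁺ x₂ → M` through `f` are such maps, so `f` fixes every element. Since `f` preserves
markings, every immediate predecessor of `x₁` is one of `x₂`. With a simulation in the other
direction as well, extensionality yields `x₁ = x₂`.
-/

/-- A simulation of bare relations, with no markings: the predecessors of `f a` are exactly the
images of the predecessors of `a`. It is needed besides `IsSimulation` because the inclusion of an
initial segment `M ↓⁺ x` into `M` does not in general preserve markings. -/
def IsOrderSimulation {α β : Type*} (r : α → α → Prop) (s : β → β → Prop) (f : α → β) : Prop :=
  ∀ a b, s b (f a) ↔ ∃ a', r a' a ∧ f a' = b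

namespace IsOrderSimulation

variable {α β γ : Type*} {r : α → α → Prop} {s : β → β → Prop} {t : γ → γ → Prop}

theorem comp {f : α → β} {g : β → γ} (hg : IsOrderSimulation s t g)
    (hf : IsOrderSimulation r s f) : IsOrderSimulation r t (g ∘ f) := fun a c =>
  calc
    t c (g (f a)) ↔ ∃ b, s b (f a) ∧ g b = c := hg (f a) c
    _ ↔ ∃ b, (∃ a', r a' a ∧ f a' = b) ∧ g b = c := by simp only [hf a]
    _ ↔ ∃ a', r a' a ∧ g (f a') = c := exists_exists_and_eq_and

theorem unique (hr : WellFounded r) (hs : ∀ x y, (∀ z, s z x ↔ s z y) → x = y) {f g : α → β}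
    (hf : IsOrderSimulation r s f) (hg : IsOrderSimulation r s g) : f = g := by
  funext a
  induction a using hr.induction with
  | _ a ih =>
    refine hs _ _ fun b => ?_
    calc
      s b (f a) ↔ ∃ a', r a' a ∧ f a' = b := hf a b
      _ ↔ ∃ a', r a' a ∧ g a' = b := exists_congr fun a' => and_congr_right fun h => by rw [ih a' h]
      _ ↔ s b (g a) := (hg a b).symm

end IsOrderSimulation

theorem IsSimulation.isOrderSimulation {M N : Mewo.{u}} {f : M.carrier → N.carrier}
    (hf : IsSimulation M N f) : IsOrderSimulation M.lt N.lt f := by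
  obtain ⟨-, map_lt, exists_lt⟩ := hf
  refine fun a b => ⟨exists_lt a b, ?_⟩
  rintro ⟨a', ha', rfl⟩
  exact map_lt a' a ha'

namespace MewoIso

variable {M N : Mewo.{u}}

/-- The inverse of an isomorphism of mewos. -/
def symm (e : MewoIso M N) : MewoIso N M where
  toEquiv := e.toEquiv.symm
  lt_iff x y := by simp only [e.lt_iff, Equiv.apply_symm_apply]
  marked_iff x := by simp only [e.marked_iff, Equiv.apply_symm_apply]

theorem isSimulation (e : MewoIso M N) : IsSimulation M N e.toEquiv := by
  refine ⟨fun x => (e.marked_iff x).mp, fun x y => (e.lt_iff x y).mp, fun x y hy => ?_⟩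
  obtain ⟨x', rfl⟩ := e.toEquiv.surjective y
  exact ⟨x', (e.lt_iff x' x).mpr hy, rfl⟩

end MewoIso

namespace Mewo

variable {M : Mewo.{u}} {x₁ x₂ : M.carrier}

theorem isOrderSimulation_seg_val (M : Mewo.{u}) (x : M.carrier) :
    IsOrderSimulation (M.seg x).lt M.lt Subtype.val := by
  refine fun a y => ⟨fun hy => ⟨⟨y, .head hy a.2⟩, hy, rfl⟩, ?_⟩
  rintro ⟨b, hb, rfl⟩
  exact hb

theorem val_apply_of_isOrderSimulation_seg {f : (M.seg x₁).carrier → (M.seg x₂).carrier}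
    (hf : IsOrderSimulation (M.seg x₁).lt (M.seg x₂).lt f) (a : (M.seg x₁).carrier) :
    (f a).val = a.val :=
  congrFun (IsOrderSimulation.unique (M.seg x₁).wf M.ext
    ((isOrderSimulation_seg_val M x₂).comp hf) (isOrderSimulation_seg_val M x₁)) a

theorem lt_of_isSimulation_seg {f : (M.seg x₁).carrier → (M.seg x₂).carrier}
    (hf : IsSimulation (M.seg x₁) (M.seg x₂) f) {z : M.carrier} (hz : M.lt z x₁) :
    M.lt z x₂ := by
  let a : (M.seg x₁).carrier := ⟨z, .single hz⟩
  have marked_apply : M.lt (f a).val x₂ := hf.1 a hz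
  rwa [val_apply_of_isOrderSimulation_seg hf.isOrderSimulation a] at marked_apply

theorem seg_injective_general {f : (M.seg x₁).carrier → (M.seg x₂).carrier}
    {g : (M.seg x₂).carrier → (M.seg x₁).carrier} (hf : IsSimulation (M.seg x₁) (M.seg x₂) f)
    (hg : IsSimulation (M.seg x₂) (M.seg x₁) g) : x₁ = x₂ :=
  M.ext x₁ x₂ fun _ => ⟨lt_of_isSimulation_seg hf, lt_of_isSimulation_seg hg⟩

end Mewo

/-- the map sending `x` to the initial segment `M ↓⁺ x` is injective:
an isomorphism of mewos between `M ↓⁺ x₁` and `M ↓⁺ x₂` forces `x₁ = x₂`. -/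
theorem Mewo.seg_injective (M : Mewo.{u}) (x₁ x₂ : M.carrier)
    (e : MewoIso (M.seg x₁) (M.seg x₂)) : x₁ = x₂ :=
  seg_injective_general e.isSimulation e.symm.isSimulation
end

section
/- Let (X, <, m_X) and (Y, <, m_Y) be mewos and let f : X → Y be a function that preserves markings (m_X x implies m_Y (f x)). Then the following are equivalent: (i) f is a simulation; (ii) for every x : X there is an isomorphism of mewos between the initial segments X ↓⁺ x and Y ↓⁺ (f x). -/
universe u

/-!
The order-theoretic content of a simulation is that the predecessors of `f x` are exactly the
images of the predecessors of `x`. By wellfounded induction, a map with this property out of an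
extensional wellfounded relation is injective, hence restricts to isomorphisms of initial
segments; and two such maps into an extensional relation coincide. Conversely, given isomorphisms
`φ x : M ↓⁺ x ≅ N ↓⁺ (f x)` and `w <⁺ x`, uniqueness shows that `φ x` and `φ w` agree below `w`.
So `φ x w` and `f w` have the same predecessors and are equal by extensionality: every `φ x` is a
restriction of `f`.
-/

/-- The predecessors of `f a` are exactly the images of the predecessors of `a`: the part of the
notion of simulation that does not mention markings. Equivalently, `f` is a monotone
`Relation.Fibration`. -/
def PreservesPredecessors {α β : Type*} (r : α → α → Prop) (s : β → β → Prop) (f : α → β) : Prop :=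
  ∀ (a : α) (b : β), s b (f a) ↔ ∃ a', r a' a ∧ f a' = b

namespace PreservesPredecessors

variable {α β γ : Type*} {r : α → α → Prop} {s : β → β → Prop} {t : γ → γ → Prop}
  {f : α → β}

theorem map_rel (hf : PreservesPredecessors r s f) {a b : α} (hab : r a b) : s (f a) (f b) :=
  (hf b (f a)).2 ⟨a, hab, rfl⟩

theorem comp {g : β → γ} (hg : PreservesPredecessors s t g) (hf : PreservesPredecessors r s f) :
    PreservesPredecessors r t (g ∘ f) := by
  refine fun a c => ⟨fun hc => ?_, ?_⟩
  · obtain ⟨b, hb, rfl⟩ := (hg (f a) c).1 hc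
    obtain ⟨a', ha', rfl⟩ := (hf a b).1 hb
    exact ⟨a', ha', rfl⟩
  · rintro ⟨a', ha', rfl⟩
    exact hg.map_rel (hf.map_rel ha')

theorem transGen (hf : PreservesPredecessors r s f) :
    PreservesPredecessors (Relation.TransGen r) (Relation.TransGen s) f := by
  refine fun a b => ⟨fun hb => ?_, ?_⟩
  · induction hb using Relation.TransGen.head_induction_on with
    | single hb =>
      obtain ⟨a', ha', rfl⟩ := (hf a _).1 hb
      exact ⟨a', .single ha', rfl⟩
    | head hb _ ih =>
      obtain ⟨c, hc, rfl⟩ := ih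
      obtain ⟨a', ha', rfl⟩ := (hf c _).1 hb
      exact ⟨a', .head ha' hc, rfl⟩
  · rintro ⟨a', ha', rfl⟩
    exact ha'.lift f fun _ _ => hf.map_rel

theorem injective (hf : PreservesPredecessors r s f) (wf : WellFounded r)
    (ext : ∀ x y, (∀ z, r z x ↔ r z y) → x = y) : Function.Injective f := by
  intro x
  induction x using wf.induction with
  | _ x ih =>
    intro y hxy
    refine ext x y fun z => ⟨fun hz => ?_, fun hz => ?_⟩
    · obtain ⟨w, hw, hwz⟩ := (hf y (f z)).1 (hxy ▸ hf.map_rel hz)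
      rwa [ih z hz hwz.symm]
    · obtain ⟨w, hw, hwz⟩ := (hf x (f z)).1 (hxy ▸ hf.map_rel hz)
      rwa [← ih w hw hwz]

theorem map_rel_iff (hf : PreservesPredecessors r s f) (inj : Function.Injective f) {a b : α} :
    s (f a) (f b) ↔ r a b := by
  simp only [hf b (f a), inj.eq_iff, exists_eq_right]

theorem unique {g : α → β} (hf : PreservesPredecessors r s f)
    (hg : PreservesPredecessors r s g) (wf : WellFounded r)
    (ext : ∀ x y, (∀ z, s z x ↔ s z y) → x = y) : f = g := by
  funext a
  induction a using wf.induction with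
  | _ a ih =>
    refine ext _ _ fun b => ?_
    rw [hf a b, hg a b]
    exact exists_congr fun a' => and_congr_right fun ha' => by rw [ih a' ha']

end PreservesPredecessors

namespace Mewo

variable (M : Mewo.{u})

theorem preservesPredecessors_seg_val (x : M.carrier) :
    PreservesPredecessors (M.seg x).lt M.lt Subtype.val :=
  fun a _ => ⟨fun hb => ⟨⟨_, .head hb a.2⟩, hb, rfl⟩, by rintro ⟨_, hb, rfl⟩; exact hb⟩

theorem preservesPredecessors_seg_inclusion {w x : M.carrier} (hwx : Relation.TransGen M.lt w x) :
    PreservesPredecessors (M.seg w).lt (M.seg x).lt fun v => ⟨v.1, v.2.trans hwx⟩ :=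
  fun v _ => ⟨fun hu => ⟨⟨_, .head hu v.2⟩, hu, rfl⟩, by rintro ⟨_, hu, rfl⟩; exact hu⟩

end Mewo

namespace MewoIso

variable {M N : Mewo.{u}}

theorem preservesPredecessors (φ : MewoIso M N) :
    PreservesPredecessors M.lt N.lt φ.toEquiv := by
  refine fun a b => ⟨fun hb => ⟨φ.toEquiv.symm b, ?_, φ.toEquiv.apply_symm_apply b⟩, ?_⟩
  · rwa [φ.lt_iff, φ.toEquiv.apply_symm_apply]
  · rintro ⟨a', ha', rfl⟩
    exact (φ.lt_iff a' a).1 ha'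

theorem preservesPredecessors_seg_coe {x : M.carrier} {y : N.carrier}
    (φ : MewoIso (M.seg x) (N.seg y)) :
    PreservesPredecessors (M.seg x).lt N.lt fun v => (φ.toEquiv v).1 :=
  (N.preservesPredecessors_seg_val y).comp φ.preservesPredecessors

theorem lt_iff_exists_seg_apply_eq {x : M.carrier} {y : N.carrier} (φ : MewoIso (M.seg x) (N.seg y))
    (b : N.carrier) : N.lt b y ↔ ∃ v, M.lt v.1 x ∧ (φ.toEquiv v).1 = b := by
  constructor
  · intro hb
    obtain ⟨v, hv⟩ := φ.toEquiv.surjective ⟨b, .single hb⟩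
    refine ⟨v, (φ.marked_iff v).2 ?_, congrArg Subtype.val hv⟩
    rwa [hv]
  · rintro ⟨v, hv, rfl⟩
    exact (φ.marked_iff v).1 hv

theorem seg_apply_eq {w x : M.carrier} {y z : N.carrier} (φ : MewoIso (M.seg x) (N.seg y))
    (ψ : MewoIso (M.seg w) (N.seg z)) (hwx : Relation.TransGen M.lt w x) :
    (φ.toEquiv ⟨w, hwx⟩).1 = z := by
  have agree : (fun v : (M.seg w).carrier => (φ.toEquiv ⟨v.1, v.2.trans hwx⟩).1) =
      fun v => (ψ.toEquiv v).1 :=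
    (φ.preservesPredecessors_seg_coe.comp (M.preservesPredecessors_seg_inclusion hwx)).unique
      ψ.preservesPredecessors_seg_coe (M.seg w).wf N.ext
  refine N.ext _ _ fun b => ?_
  rw [φ.preservesPredecessors_seg_coe ⟨w, hwx⟩ b, ψ.lt_iff_exists_seg_apply_eq b]
  constructor
  · rintro ⟨⟨v, _⟩, hvw, rfl⟩
    exact ⟨⟨v, .single hvw⟩, hvw, (congrFun agree ⟨v, .single hvw⟩).symm⟩
  · rintro ⟨v, hvw, rfl⟩
    exact ⟨⟨v.1, v.2.trans hwx⟩, hvw, congrFun agree v⟩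

end MewoIso

section

variable {M N : Mewo.{u}} {f : M.carrier → N.carrier}

theorem PreservesPredecessors.nonempty_seg_iso (hf : PreservesPredecessors M.lt N.lt f)
    (x : M.carrier) : Nonempty (MewoIso (M.seg x) (N.seg (f x))) := by
  have inj : Function.Injective f := hf.injective M.wf M.ext
  let restrict : (M.seg x).carrier → (N.seg (f x)).carrier :=
    fun a => ⟨f a.1, hf.transGen.map_rel a.2⟩
  have bijective : Function.Bijective restrict := by
    refine ⟨fun a b hab => Subtype.ext (inj (congrArg Subtype.val hab)), ?_⟩
    rintro ⟨b, hb⟩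
    obtain ⟨a, ha, rfl⟩ := (hf.transGen x b).1 hb
    exact ⟨⟨a, ha⟩, rfl⟩
  exact ⟨⟨Equiv.ofBijective restrict bijective, fun _ _ => (hf.map_rel_iff inj).symm,
    fun _ => (hf.map_rel_iff inj).symm⟩⟩

theorem preservesPredecessors_of_seg_iso
    (φ : ∀ x : M.carrier, MewoIso (M.seg x) (N.seg (f x))) :
    PreservesPredecessors M.lt N.lt f := by
  intro x b
  rw [(φ x).lt_iff_exists_seg_apply_eq b]
  constructor
  · rintro ⟨v, hv, rfl⟩
    exact ⟨v.1, hv, ((φ x).seg_apply_eq (φ v.1) v.2).symm⟩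
  · rintro ⟨v, hv, rfl⟩
    exact ⟨⟨v, .single hv⟩, hv, (φ x).seg_apply_eq (φ v) (.single hv)⟩

theorem isSimulation_iff_map_marked_and_preservesPredecessors :
    IsSimulation M N f ↔
      (∀ x, M.marked x → N.marked (f x)) ∧ PreservesPredecessors M.lt N.lt f := by
  refine and_congr_right fun _ => ⟨fun ⟨mono, lift⟩ x y => ⟨lift x y, ?_⟩, fun hf =>
    ⟨fun _ _ => hf.map_rel, fun x y => (hf x y).1⟩⟩
  rintro ⟨x', hx', rfl⟩
  exact mono x' x hx'

end

/-- a marking-preserving function is a simulation iff it preserves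
initial segments up to isomorphism of mewos. -/
theorem isSimulation_iff_seg_iso (M N : Mewo.{u}) (f : M.carrier → N.carrier)
    (hf : ∀ x : M.carrier, M.marked x → N.marked (f x)) :
    IsSimulation M N f ↔ ∀ x : M.carrier, Nonempty (MewoIso (M.seg x) (N.seg (f x))) := by
  rw [isSimulation_iff_map_marked_and_preservesPredecessors, and_iff_right hf]
  exact ⟨fun h => h.nonempty_seg_iso, fun h => preservesPredecessors_of_seg_iso fun x => (h x).some⟩
end

section
/- The covered mewos, ordered by bounded simulation, form an extensional wellfounded order: (a) the relation 'there exists a bounded simulation X < Y' is wellfounded on the type of covered mewos with carrier in a fixed universe u; (b) if X and Y are covered mewos such that for every covered mewo Z (with carrier in universe u) there is a bounded simulation Z < X if and only if there is a bounded simulation Z < Y, then X and Y are isomorphic as mewos. -/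
universe u

/-! Sending an element of a wellfounded order to the set of the images of its predecessors is the
Mostowski collapse; on an extensional order it is injective. A mewo `M` is thereby represented by
the set `M.toZFSet` of the collapses of its marked elements. The segment at `x` is represented by
the collapse of `x`, so bounded simulations become memberships and wellfoundedness is that of `∈`.
When `M` is covered, the collapses of its elements form exactly the transitive closure of
`M.toZFSet`, so `M.toZFSet` determines `M` up to isomorphism, and extensionality of the order of
covered mewos is extensionality of sets. -/

section MostowskiCollapse

variable {α β : Type u} {r : α → α → Prop} {s : β → β → Prop}

/-- The Mostowski collapse of a wellfounded relation: each element is sent to the set of the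
collapses of its predecessors. -/
noncomputable def mostowskiCollapse (hr : WellFounded r) : α → ZFSet.{u} :=
  hr.fix fun x collapse => ZFSet.range fun y : { y // r y x } => collapse y y.2

theorem mem_mostowskiCollapse (hr : WellFounded r) {x : α} {z : ZFSet.{u}} :
    z ∈ mostowskiCollapse hr x ↔ ∃ y, r y x ∧ mostowskiCollapse hr y = z := by
  rw [mostowskiCollapse, hr.fix_eq, ZFSet.mem_range, Subtype.exists]
  simp only [exists_prop]

theorem mostowskiCollapse_mem_of_rel (hr : WellFounded r) {x y : α} (hxy : r x y) :
    mostowskiCollapse hr x ∈ mostowskiCollapse hr y :=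
  (mem_mostowskiCollapse hr).2 ⟨x, hxy, rfl⟩

theorem mostowskiCollapse_injective (hr : WellFounded r)
    (ext : ∀ x y, (∀ z, r z x ↔ r z y) → x = y) : Function.Injective (mostowskiCollapse hr) := by
  intro x
  induction x using hr.induction with
  | _ x ih =>
    intro y hxy
    refine ext x y fun z => ⟨fun hzx => ?_, fun hzy => ?_⟩
    · obtain ⟨w, hwy, hw⟩ :=
        (mem_mostowskiCollapse hr).1 (hxy ▸ mostowskiCollapse_mem_of_rel hr hzx)
      rwa [ih z hzx hw.symm]
    · obtain ⟨w, hwx, hw⟩ :=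
        (mem_mostowskiCollapse hr).1 (hxy ▸ mostowskiCollapse_mem_of_rel hr hzy)
      rwa [← ih w hwx hw]

theorem mostowskiCollapse_mem_iff (hr : WellFounded r)
    (ext : ∀ x y, (∀ z, r z x ↔ r z y) → x = y) {x y : α} :
    mostowskiCollapse hr x ∈ mostowskiCollapse hr y ↔ r x y := by
  simp only [mem_mostowskiCollapse, (mostowskiCollapse_injective hr ext).eq_iff, exists_eq_right]

theorem mostowskiCollapse_map (hr : WellFounded r) (hs : WellFounded s) (f : r →r s)
    (hf : Relation.Fibration r s f) (x : α) :
    mostowskiCollapse hs (f x) = mostowskiCollapse hr x := by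
  induction x using hr.induction with
  | _ x ih =>
    ext z
    rw [mem_mostowskiCollapse, mem_mostowskiCollapse]
    constructor
    · rintro ⟨_, hy, rfl⟩
      obtain ⟨x', hx', rfl⟩ := hf hy
      exact ⟨x', hx', (ih x' hx').symm⟩
    · rintro ⟨x', hx', rfl⟩
      exact ⟨f x', f.map_rel hx', ih x' hx'⟩

end MostowskiCollapse

namespace Mewo

variable {M N : Mewo.{u}}

/-- The Mostowski collapse of the order of a mewo, ignoring the marking. -/
noncomputable def collapse (M : Mewo.{u}) : M.carrier → ZFSet.{u} :=
  mostowskiCollapse M.wf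

theorem collapse_injective (M : Mewo.{u}) : Function.Injective M.collapse :=
  mostowskiCollapse_injective M.wf M.ext

theorem mem_collapse {x : M.carrier} {z : ZFSet.{u}} :
    z ∈ M.collapse x ↔ ∃ y, M.lt y x ∧ M.collapse y = z :=
  mem_mostowskiCollapse M.wf

theorem collapse_mem_collapse_iff {x y : M.carrier} :
    M.collapse x ∈ M.collapse y ↔ M.lt x y :=
  mostowskiCollapse_mem_iff M.wf M.ext

theorem collapse_seg (x : M.carrier) (y : (M.seg x).carrier) :
    (M.seg x).collapse y = M.collapse y.1 :=
  (mostowskiCollapse_map (M.seg x).wf M.wf ⟨Subtype.val, id⟩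
    (fun b z hz => ⟨⟨z, .head hz b.2⟩, hz, rfl⟩) y).symm

/-- The set representing a mewo: its elements are the collapses of the marked elements. -/
noncomputable def toZFSet (M : Mewo.{u}) : ZFSet.{u} :=
  ZFSet.range fun x : { x // M.marked x } => M.collapse x

theorem mem_toZFSet {z : ZFSet.{u}} :
    z ∈ M.toZFSet ↔ ∃ x, M.marked x ∧ M.collapse x = z := by
  rw [toZFSet, ZFSet.mem_range, Subtype.exists]
  simp only [exists_prop]

theorem collapse_mem_toZFSet_iff {x : M.carrier} : M.collapse x ∈ M.toZFSet ↔ M.marked x := by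
  simp only [mem_toZFSet, M.collapse_injective.eq_iff, exists_eq_right]

theorem toZFSet_seg (x : M.carrier) : (M.seg x).toZFSet = M.collapse x := by
  ext z
  rw [mem_toZFSet, mem_collapse]
  constructor
  · rintro ⟨y, hy, rfl⟩
    exact ⟨y.1, hy, (collapse_seg x y).symm⟩
  · rintro ⟨y, hy, rfl⟩
    exact ⟨⟨y, .single hy⟩, hy, collapse_seg x _⟩

theorem covered_seg (M : Mewo.{u}) (x : M.carrier) : (M.seg x).Covered := by
  rintro ⟨y, hy⟩
  induction hy using Relation.TransGen.head_induction_on with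
  | single hyx => exact ⟨⟨_, .single hyx⟩, hyx, .refl⟩
  | @head y w hyw hwx ih =>
    obtain ⟨x₀, hx₀, hwx₀⟩ := ih
    have hyw' : (M.seg x).lt ⟨y, .head hyw hwx⟩ ⟨w, hwx⟩ := hyw
    exact ⟨x₀, hx₀, .head hyw' hwx₀⟩

theorem exists_collapse_eq_of_transGen_mem {z : ZFSet.{u}}
    (hz : Relation.TransGen (· ∈ ·) z M.toZFSet) : ∃ x, M.collapse x = z := by
  induction hz using Relation.TransGen.head_induction_on with
  | single hz =>
    obtain ⟨x, -, hx⟩ := mem_toZFSet.1 hz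
    exact ⟨x, hx⟩
  | head hzw _ ih =>
    obtain ⟨y, rfl⟩ := ih
    obtain ⟨x, -, hx⟩ := mem_collapse.1 hzw
    exact ⟨x, hx⟩

theorem Covered.transGen_collapse_mem (hM : M.Covered) (x : M.carrier) :
    Relation.TransGen (· ∈ ·) (M.collapse x) M.toZFSet := by
  obtain ⟨x₀, hx₀, hxx₀⟩ := hM x
  have hle : Relation.ReflTransGen (· ∈ ·) (M.collapse x) (M.collapse x₀) :=
    Relation.ReflTransGen.lift (r := M.lt) M.collapse
      (fun _ _ => collapse_mem_collapse_iff.2) x x₀ hxx₀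
  exact .tail' hle (collapse_mem_toZFSet_iff.2 hx₀)

theorem Covered.range_collapse (hM : M.Covered) :
    Set.range M.collapse = { z | Relation.TransGen (· ∈ ·) z M.toZFSet } :=
  Set.Subset.antisymm (Set.range_subset_iff.2 hM.transGen_collapse_mem)
    fun _ => exists_collapse_eq_of_transGen_mem

theorem nonempty_iso_of_range_collapse_eq (hrange : Set.range M.collapse = Set.range N.collapse)
    (hset : M.toZFSet = N.toZFSet) : Nonempty (MewoIso M N) := by
  let e : M.carrier ≃ N.carrier :=
    (Equiv.ofInjective _ M.collapse_injective).trans <|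
      (Equiv.setCongr hrange).trans (Equiv.ofInjective _ N.collapse_injective).symm
  have he (x : M.carrier) : N.collapse (e x) = M.collapse x :=
    Equiv.apply_ofInjective_symm N.collapse_injective _
  refine ⟨⟨e, fun x y => ?_, fun x => ?_⟩⟩
  · rw [← collapse_mem_collapse_iff, ← collapse_mem_collapse_iff, he, he]
  · rw [← collapse_mem_toZFSet_iff, ← collapse_mem_toZFSet_iff, he, hset]

theorem Covered.nonempty_iso_of_toZFSet_eq (hM : M.Covered) (hN : N.Covered)
    (hset : M.toZFSet = N.toZFSet) : Nonempty (MewoIso M N) :=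
  nonempty_iso_of_range_collapse_eq (by rw [hM.range_collapse, hN.range_collapse, hset]) hset

end Mewo

namespace MewoIso

variable {M N : Mewo.{u}}

theorem collapse_apply (e : MewoIso M N) (x : M.carrier) :
    N.collapse (e.toEquiv x) = M.collapse x := by
  refine mostowskiCollapse_map M.wf N.wf ⟨e.toEquiv, (e.lt_iff _ _).1⟩ (fun x y hy => ?_) x
  obtain ⟨x', rfl⟩ := e.toEquiv.surjective y
  exact ⟨x', (e.lt_iff x' x).2 hy, rfl⟩

theorem toZFSet_eq (e : MewoIso M N) : M.toZFSet = N.toZFSet := by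
  ext z
  rw [Mewo.mem_toZFSet, Mewo.mem_toZFSet]
  exact e.toEquiv.exists_congr fun x => by rw [e.marked_iff, e.collapse_apply]

end MewoIso

theorem BoundedSim.toZFSet_mem {M N : Mewo.{u}} (h : BoundedSim M N) :
    M.toZFSet ∈ N.toZFSet := by
  obtain ⟨y, hy, ⟨e⟩⟩ := h
  rw [e.toZFSet_eq, Mewo.toZFSet_seg]
  exact Mewo.collapse_mem_toZFSet_iff.2 hy

theorem boundedSim_seg {M : Mewo.{u}} {x : M.carrier} (hx : M.marked x) :
    BoundedSim (M.seg x) M :=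
  ⟨x, hx, ⟨⟨Equiv.refl _, fun _ _ => Iff.rfl, fun _ => Iff.rfl⟩⟩⟩

theorem Mewo.mem_toZFSet_iff_exists_boundedSim {M : Mewo.{u}} {z : ZFSet.{u}} :
    z ∈ M.toZFSet ↔ ∃ K : Mewo.{u}, K.Covered ∧ BoundedSim K M ∧ K.toZFSet = z := by
  constructor
  · intro hz
    obtain ⟨x, hx, rfl⟩ := mem_toZFSet.1 hz
    exact ⟨M.seg x, M.covered_seg x, boundedSim_seg hx, toZFSet_seg x⟩
  · rintro ⟨K, -, hK, rfl⟩
    exact hK.toZFSet_mem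

theorem wellFounded_boundedSim : WellFounded BoundedSim.{u} :=
  Subrelation.wf BoundedSim.toZFSet_mem (InvImage.wf Mewo.toZFSet ZFSet.mem_wf)

theorem Mewo.Covered.nonempty_iso_of_forall_boundedSim_iff {X Y : Mewo.{u}}
    (hX : X.Covered) (hY : Y.Covered)
    (h : ∀ Z : Mewo.{u}, Z.Covered → (BoundedSim Z X ↔ BoundedSim Z Y)) :
    Nonempty (MewoIso X Y) := by
  refine hX.nonempty_iso_of_toZFSet_eq hY (ZFSet.ext fun z => ?_)
  simp only [mem_toZFSet_iff_exists_boundedSim]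
  exact exists_congr fun Z => and_congr_right fun hZ => and_congr_left' (h Z hZ)

theorem coveredMewo_boundedSim_wellFounded_and_extensional_general :
    WellFounded BoundedSim.{u} ∧
    (∀ X Y : Mewo.{u}, X.Covered → Y.Covered →
      (∀ Z : Mewo.{u}, Z.Covered → (BoundedSim Z X ↔ BoundedSim Z Y)) →
      Nonempty (MewoIso X Y)) :=
  ⟨wellFounded_boundedSim, fun _ _ hX hY => hX.nonempty_iso_of_forall_boundedSim_iff hY⟩

/-- the covered mewos, ordered by bounded simulation, form an extensional
wellfounded order. -/
theorem coveredMewo_boundedSim_wellFounded_and_extensional :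
    (WellFounded fun X Y : { M : Mewo.{u} // M.Covered } => BoundedSim X.1 Y.1) ∧
    (∀ X Y : { M : Mewo.{u} // M.Covered },
      (∀ Z : { M : Mewo.{u} // M.Covered }, BoundedSim Z.1 X.1 ↔ BoundedSim Z.1 Y.1) →
      Nonempty (MewoIso X.1 Y.1)) := by
  exact coveredMewo_boundedSim_wellFounded_and_extensional_general.imp (InvImage.wf Subtype.val)
    fun hext X Y h => hext X Y X.2 Y.2 fun Z hZ => h ⟨Z, hZ⟩
end
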